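/- Fix natural numbers g, n with 2g + n > 0 and (g, n) ≠ (0, 1). Then SRT_{g,n,2}, the set of isomorphism classes of stable rooted trees of type (g, n, 2), is a finite set of even cardinality. -/

import Mathlib

/-- A raw combinatorial rooted tree with genus labels and `n` labeled regular legs.
Vertices are `0, 1, …, numV − 1` with root `0`; `parent v < v` (for valid trees)
encodes the rooted tree structure; `genus v` is the genus label of vertex `v`;
`legAt i` is the vertex carrying the regular leg `i`.  The `m` frozen legs are
always attached to the root and enter only through the stability condition. -/
structure RawTree (n : ℕ) where
  numV : ℕ
  parent : ℕ → ℕ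
  genus : ℕ → ℕ
  legAt : Fin n → ℕ

namespace RawTree

variable {n : ℕ}

/-- The set of children of the vertex `v` (edge-ends at `v` directed away from
the root correspond to the children of `v`). -/
def children (T : RawTree n) (v : ℕ) : Finset ℕ :=
  (Finset.range T.numV).filter (fun w => T.parent w = v ∧ w ≠ v)

/-- The set of regular legs attached to the vertex `v`. -/
def legsAt (T : RawTree n) (v : ℕ) : Finset (Fin n) :=
  Finset.univ.filter (fun i => T.legAt i = v)

/-- `T` is a stable rooted tree of type `(g, n, m)`: it is a genuine rooted tree
with root `0`, all legs attached to actual vertices, total genus `g`, and every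
vertex `v` satisfies the stability condition `2 g(v) − 2 + |H(v)| > 0`, where
`|H(v)| = |children| + |regular legs at v| + (m if v is the root, else 1)`. -/
def IsSRT (g n m : ℕ) (T : RawTree n) : Prop :=
  0 < T.numV ∧
  T.parent 0 = 0 ∧
  (∀ v, 0 < v → v < T.numV → T.parent v < v) ∧
  (∀ i, T.legAt i < T.numV) ∧
  (∑ v ∈ Finset.range T.numV, T.genus v) = g ∧
  (∀ v, v < T.numV →
    2 < 2 * T.genus v +
      ((T.children v).card + (T.legsAt v).card + (if v = 0 then m else 1)))

/-- Isomorphism of raw trees: a bijection of the vertex sets preserving the root,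
the tree structure, the genus labels and the leg labels. -/
def Iso (T T' : RawTree n) : Prop :=
  ∃ σ : ℕ → ℕ,
    Set.BijOn σ (Set.Iio T.numV) (Set.Iio T'.numV) ∧
    σ 0 = 0 ∧
    (∀ v < T.numV, σ (T.parent v) = T'.parent (σ v)) ∧
    (∀ v < T.numV, T'.genus (σ v) = T.genus v) ∧
    (∀ i, σ (T.legAt i) = T'.legAt i)

/-- The root of `T` has genus `0` and its unique positive half-edge is an edge
(exactly one child and no regular legs at the root). -/
def RootContractible (T : RawTree n) : Prop :=
  T.genus 0 = 0 ∧ (T.children 0).card = 1 ∧ (T.legsAt 0).card = 0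

/-- The root of `T` satisfies `2 g(v_r) − 2 + |H_+(v_r)| ≥ 0`. -/
def RootStablePlus (T : RawTree n) : Prop :=
  2 ≤ 2 * T.genus 0 + ((T.children 0).card + (T.legsAt 0).card)

/-- Contraction of a tree whose root has genus `0` and a unique positive
half-edge which is an edge: delete the root and this edge, declare the unique
child (which is the vertex `1`) to be the new root, and reattach the frozen legs
to it. -/
def contract (T : RawTree n) : RawTree n where
  numV := T.numV - 1
  parent := fun v => T.parent (v + 1) - 1
  genus := fun v => T.genus (v + 1)
  legAt := fun i => T.legAt i - 1

end RawTree

/-- Representatives of stable rooted trees of type `(g, n, m)`. -/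
def SRTRep (g n m : ℕ) : Type :=
  {T : RawTree n // RawTree.IsSRT g n m T}

/-- The isomorphism relation on representatives. -/
def SRTRel (g n m : ℕ) (S S' : SRTRep g n m) : Prop :=
  RawTree.Iso S.1 S'.1

/-- `SRT g n m`: the set of isomorphism classes of stable rooted trees of type
`(g, n, m)`. -/
def SRT (g n m : ℕ) : Type :=
  Quot (SRTRel g n m)

namespace RawTree

variable {n : ℕ}

theorem mem_children (T : RawTree n) (v w : ℕ) :
    w ∈ T.children v ↔ w < T.numV ∧ T.parent w = v ∧ w ≠ v := by
  simp [children]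

theorem mem_legsAt (T : RawTree n) (v : ℕ) (i : Fin n) :
    i ∈ T.legsAt v ↔ T.legAt i = v := by
  simp [legsAt]

theorem Iso.rfl' (T : RawTree n) : Iso T T :=
  ⟨id, Set.bijOn_id _, rfl, fun _ _ => rfl, fun _ _ => rfl, fun _ => rfl⟩

/-- Agreement on the relevant range gives an isomorphism. -/
theorem Iso.of_agree (T T' : RawTree n) (h1 : T.numV = T'.numV)
    (h2 : ∀ v < T.numV, T.parent v = T'.parent v)
    (h3 : ∀ v < T.numV, T.genus v = T'.genus v)
    (h4 : ∀ i, T.legAt i = T'.legAt i) : Iso T T' := by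
  refine ⟨id, ?_, rfl, fun v hv => h2 v hv, fun v hv => (h3 v hv).symm, h4⟩
  rw [h1]; exact Set.bijOn_id _

/-- Sum of numbers of children. -/
theorem sum_children {g m : ℕ} (T : RawTree n) (h : IsSRT g n m T) :
    ∑ v ∈ Finset.range T.numV, (T.children v).card + 1 = T.numV := by
  obtain ⟨h0, hp, hlt, -⟩ := h
  have key : ((Finset.range T.numV).erase 0).card
      = ∑ v ∈ Finset.range T.numV,
        (((Finset.range T.numV).erase 0).filter (fun w => T.parent w = v)).card := by
    apply Finset.card_eq_sum_card_fiberwise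
    intro w hw
    simp only [Finset.coe_erase, Finset.coe_range, Set.mem_sdiff, Set.mem_Iio,
      Set.mem_singleton_iff] at hw ⊢
    have := hlt w (by omega) hw.1
    omega
  have e : ∀ v ∈ Finset.range T.numV,
      ((Finset.range T.numV).erase 0).filter (fun w => T.parent w = v) = T.children v := by
    intro v hv
    ext w
    simp only [mem_children, Finset.mem_filter, Finset.mem_erase, Finset.mem_range]
    constructor
    · rintro ⟨⟨a, b⟩, c⟩
      have := hlt w (by omega) b
      exact ⟨b, c, by omega⟩
    · rintro ⟨a, b, c⟩
      refine ⟨⟨?_, a⟩, b⟩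
      rintro rfl
      omega
  rw [Finset.sum_congr rfl (fun v hv => by rw [e v hv])] at key
  rw [← key, Finset.card_erase_of_mem (by simpa using h0)]
  simp; omega

theorem sum_legs {g m : ℕ} (T : RawTree n) (h : IsSRT g n m T) :
    ∑ v ∈ Finset.range T.numV, (T.legsAt v).card = n := by
  obtain ⟨h0, hp, hlt, hl, -⟩ := h
  have key : (Finset.univ : Finset (Fin n)).card
      = ∑ v ∈ Finset.range T.numV,
        ((Finset.univ : Finset (Fin n)).filter (fun i => T.legAt i = v)).card := by
    apply Finset.card_eq_sum_card_fiberwise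
    intro i _
    simpa using hl i
  simpa [legsAt] using key.symm

theorem numV_le {g : ℕ} (T : RawTree n) (h : IsSRT g n 2 T) : T.numV ≤ 2 * g + n := by
  have hc := sum_children T h
  have hl := sum_legs T h
  obtain ⟨h0, hp, hlt, -, hg, hs⟩ := h
  have h1 : ∑ v ∈ Finset.range T.numV, 3 ≤ ∑ v ∈ Finset.range T.numV, (2 * T.genus v +
      ((T.children v).card + (T.legsAt v).card + (if v = 0 then 2 else 1))) := by
    apply Finset.sum_le_sum
    intro v hv
    exact hs v (by simpa using hv)
  have h2 : ∑ v ∈ Finset.range T.numV, (if v = 0 then 2 else 1) = T.numV + 1 := by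
    have : ∀ v ∈ Finset.range T.numV,
        (if v = 0 then 2 else 1) = 1 + (if v = 0 then 1 else 0) := by
      intro v _; split_ifs <;> rfl
    rw [Finset.sum_congr rfl this, Finset.sum_add_distrib, Finset.sum_ite_eq']
    simp [h0]
  simp only [Finset.sum_add_distrib, ← Finset.mul_sum] at h1
  rw [h2, hl, hg] at h1
  simp at h1
  omega

/-- Working form of `RootContractible`. -/
theorem contractible_iff {g m : ℕ} (T : RawTree n) (h : IsSRT g n m T) :
    RootContractible T ↔ T.genus 0 = 0 ∧ 1 < T.numV ∧
      (∀ v, 2 ≤ v → v < T.numV → 1 ≤ T.parent v) ∧ ∀ i, 1 ≤ T.legAt i := by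
  obtain ⟨h0, hp, hlt, hl, -⟩ := h
  unfold RootContractible
  refine and_congr_right fun _ => ?_
  rw [← and_assoc]
  refine and_congr ?_ ?_
  · constructor
    · intro hc
      obtain ⟨a, ha⟩ := Finset.card_eq_one.1 hc
      have ham : a ∈ T.children 0 := by rw [ha]; simp
      rw [mem_children] at ham
      have hV : 1 < T.numV := by omega
      have h1 : 1 ∈ T.children 0 := by
        rw [mem_children]
        have := hlt 1 (by omega) hV
        exact ⟨hV, by omega, by omega⟩
      rw [ha, Finset.mem_singleton] at h1
      refine ⟨hV, fun v hv hvV => ?_⟩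
      by_contra hcon
      have : v ∈ T.children 0 := by
        rw [mem_children]; exact ⟨hvV, by omega, by omega⟩
      rw [ha, Finset.mem_singleton] at this
      omega
    · rintro ⟨hV, hv⟩
      rw [Finset.card_eq_one]
      refine ⟨1, ?_⟩
      ext w
      rw [mem_children, Finset.mem_singleton]
      constructor
      · rintro ⟨a, b, c⟩
        by_contra hw
        have := hv w (by omega) a
        omega
      · rintro rfl
        have := hlt 1 (by omega) hV
        exact ⟨hV, by omega, by omega⟩
  · rw [Finset.card_eq_zero, Finset.eq_empty_iff_forall_notMem]
    refine forall_congr' fun i => ?_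
    rw [mem_legsAt]; omega

/-- Add a new genus `0` root below the old root. -/
def expand (T : RawTree n) : RawTree n where
  numV := T.numV + 1
  parent := fun v => if v ≤ 1 then 0 else T.parent (v - 1) + 1
  genus := fun v => if v = 0 then 0 else T.genus (v - 1)
  legAt := fun i => T.legAt i + 1

theorem expand_children_zero (T : RawTree n) (h0 : 0 < T.numV) :
    T.expand.children 0 = {1} := by
  ext w
  rw [mem_children, Finset.mem_singleton]
  simp only [expand]
  constructor
  · rintro ⟨a, b, c⟩
    split_ifs at b with hw
    omega
  · rintro rfl
    simp; omega

theorem expand_children_succ (T : RawTree n) (hp : T.parent 0 = 0) (v : ℕ) :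
    (T.expand.children (v + 1)).card = (T.children v).card := by
  symm
  apply Finset.card_bij (fun w _ => w + 1)
  · intro w hw
    rw [mem_children] at hw ⊢
    obtain ⟨a, b, c⟩ := hw
    have : w ≠ 0 := by rintro rfl; omega
    simp only [expand]
    rw [if_neg (by omega)]
    refine ⟨by omega, by simpa using b, by omega⟩
  · intro a _ b _ hab; omega
  · intro w hw
    rw [mem_children] at hw
    obtain ⟨a, b, c⟩ := hw
    simp only [expand] at a b
    split_ifs at b with hw
    refine ⟨w - 1, ?_, by omega⟩
    rw [mem_children]
    omega

theorem expand_isSRT {g : ℕ} (T : RawTree n) (h : IsSRT g n 2 T)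
    (hs : RootStablePlus T) : IsSRT g n 2 T.expand := by
  obtain ⟨h0, hp, hlt, hl, hg, hst⟩ := h
  refine ⟨Nat.succ_pos _, rfl, ?_, ?_, ?_, ?_⟩
  · intro v hv hvV
    simp only [expand] at hvV ⊢
    split_ifs with h1
    · exact hv
    · have := hlt (v - 1) (by omega) (by omega)
      omega
  · intro i
    have := hl i
    simp only [expand]; omega
  · simp only [expand]
    rw [Finset.sum_range_succ']
    simpa using hg
  · intro v hv
    cases v with
    | zero =>
      rw [expand_children_zero T h0]
      simp; omega
    | succ v =>
      rw [expand_children_succ T hp]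
      have hleg : T.expand.legsAt (v + 1) = T.legsAt v := by
        ext i; simp [mem_legsAt, expand]
      rw [hleg]
      have hv' : v < T.numV := by simp only [expand] at hv; omega
      have := hst v hv'
      have hgen : T.expand.genus (v + 1) = T.genus v := by simp [expand]
      rw [hgen, if_neg (by omega)]
      unfold RootStablePlus at hs
      split_ifs at this with hv0
      · subst hv0; omega
      · exact this

theorem expand_contractible (T : RawTree n) (h0 : 0 < T.numV) :
    RootContractible T.expand := by
  refine ⟨rfl, ?_, ?_⟩
  · rw [expand_children_zero T h0]; simp
  · rw [Finset.card_eq_zero, Finset.eq_empty_iff_forall_notMem]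
    intro i
    rw [mem_legsAt]; simp [expand]

theorem contract_stable {g : ℕ} (T : RawTree n) (h : IsSRT g n 2 T)
    (hc : RootContractible T) : IsSRT g n 2 T.contract ∧ RootStablePlus T.contract := by
  obtain ⟨hg0, hV, hpar, hleg⟩ := (contractible_iff T h).1 hc
  obtain ⟨h0, hp, hlt, hl, hg, hst⟩ := h
  have hchild : ∀ v, (T.contract.children v).card = (T.children (v + 1)).card := by
    intro v
    apply Finset.card_bij (fun w _ => w + 1)
    · intro w hw
      rw [mem_children] at hw ⊢
      simp only [contract] at hw
      have h1 := hlt 1 (by omega) hV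
      have : w ≠ 0 := by rintro rfl; rw [zero_add] at hw; omega
      have := hpar (w + 1) (by omega) (by omega)
      omega
    · intro a _ b _ hab; omega
    · intro w hw
      rw [mem_children] at hw
      have : w ≠ 0 := by rintro rfl; omega
      refine ⟨w - 1, ?_, by omega⟩
      rw [mem_children]
      simp only [contract]
      rw [Nat.sub_add_cancel (by omega)]
      omega
  have hlegs : ∀ v, T.contract.legsAt v = T.legsAt (v + 1) := by
    intro v
    ext i
    have := hleg i
    simp only [mem_legsAt, contract]; omega
  have hstab : ∀ v, v < T.contract.numV → 2 < 2 * T.contract.genus v +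
      ((T.contract.children v).card + (T.contract.legsAt v).card + 1) := by
    intro v hv
    simp only [contract] at hv
    have := hst (v + 1) (by omega)
    rw [if_neg (by omega)] at this
    rw [hchild, hlegs]
    exact this
  refine ⟨⟨?_, ?_, ?_, ?_, ?_, ?_⟩, ?_⟩
  · simp only [contract]; omega
  · have := hlt 1 (by omega) hV
    simp only [contract]; rw [zero_add]; omega
  · intro v hv hvV
    simp only [contract] at hvV ⊢
    have := hlt (v + 1) (by omega) (by omega)
    omega
  · intro i
    have := hl i
    have := hleg i
    simp only [contract]; omega
  · simp only [contract]
    rw [← hg]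
    conv_rhs => rw [show T.numV = (T.numV - 1) + 1 by omega]
    rw [Finset.sum_range_succ', hg0, add_zero]
  · intro v hv
    have := hstab v hv
    split_ifs <;> omega
  · have := hstab 0 (by simp only [contract]; omega)
    unfold RootStablePlus
    omega

theorem not_contractible_of_stablePlus (T : RawTree n) (h : RootStablePlus T) :
    ¬ RootContractible T := by
  rintro ⟨a, b, c⟩
  unfold RootStablePlus at h
  omega

theorem stablePlus_of_not_contractible {g : ℕ} (hne : (g, n) ≠ ((0 : ℕ), (1 : ℕ)))
    (T : RawTree n) (h : IsSRT g n 2 T) (hc : ¬ RootContractible T) : RootStablePlus T := by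
  by_contra hs
  have hc1 := sum_children T h
  have hl1 := sum_legs T h
  obtain ⟨h0, hp, hlt, hl, hg, hst⟩ := h
  have hr := hst 0 h0
  unfold RootStablePlus at hs
  unfold RootContractible at hc
  simp only [if_true] at hr
  have hch : (T.children 0).card = 0 := by omega
  have hV : T.numV = 1 := by
    by_contra hV
    have h1 : 1 ∈ T.children 0 := by
      rw [mem_children]
      have := hlt 1 (by omega) (by omega)
      omega
    rw [Finset.card_eq_zero] at hch
    rw [hch] at h1
    simp at h1
  rw [hV] at hl1 hg
  simp at hl1 hg
  apply hne
  rw [Prod.mk.injEq]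
  omega

theorem contract_expand (T : RawTree n) (hp : T.parent 0 = 0) :
    Iso T.expand.contract T := by
  apply Iso.of_agree
  · simp [contract, expand]
  · intro v _
    simp only [contract, expand]
    split_ifs with hv
    · have : v = 0 := by omega
      subst this; simp [hp]
    · simp
  · intro v _; simp [contract, expand]
  · intro i; simp [contract, expand]

theorem expand_contract {g : ℕ} (T : RawTree n) (h : IsSRT g n 2 T)
    (hc : RootContractible T) : Iso T.contract.expand T := by
  obtain ⟨hg0, hV, hpar, hleg⟩ := (contractible_iff T h).1 hc
  obtain ⟨h0, hp, hlt, hl, hg, hst⟩ := h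
  apply Iso.of_agree
  · simp only [contract, expand]; omega
  · intro v hv
    simp only [contract, expand] at hv ⊢
    split_ifs with hv1
    · rcases (by omega : v = 0 ∨ v = 1) with rfl | rfl
      · exact hp.symm
      · have := hlt 1 (by omega) hV
        omega
    · rw [show v - 1 + 1 = v by omega]
      have := hpar v (by omega) (by omega)
      omega
  · intro v hv
    simp only [contract, expand]
    split_ifs with hv0
    · rw [hv0, hg0]
    · rw [Nat.sub_add_cancel (by omega)]
  · intro i
    have := hleg i
    simp only [contract, expand]; omega

theorem Iso.contractible {g : ℕ} {T T' : RawTree n} (h : IsSRT g n 2 T)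
    (h' : IsSRT g n 2 T') (e : Iso T T') : RootContractible T ↔ RootContractible T' := by
  obtain ⟨σ, hb, hs0, hsp, hsg, hsl⟩ := e
  have h0 := h.1
  have hlt := h.2.2.1
  have hp := h.2.1
  have hl := h.2.2.2.1
  have hz : ∀ v < T.numV, σ v = 0 → v = 0 := by
    intro v hv hv0
    exact hb.injOn hv h0 (hv0.trans hs0.symm)
  have hpr : ∀ v < T.numV, T.parent v < T.numV := by
    intro v hv
    rcases Nat.eq_zero_or_pos v with rfl | hv0
    · omega
    · have := hlt v hv0 hv; omega
  unfold RootContractible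
  have e1 : T'.genus 0 = T.genus 0 := by
    have := hsg 0 h0
    rwa [hs0] at this
  have e2 : (T.children 0).card = (T'.children 0).card := by
    apply Finset.card_bij (fun w _ => σ w)
    · intro w hw
      rw [mem_children] at hw ⊢
      refine ⟨hb.mapsTo hw.1, ?_, fun hc => hw.2.2 (hz w hw.1 hc)⟩
      rw [← hsp w hw.1, hw.2.1, hs0]
    · intro a ha b hb' hab
      rw [mem_children] at ha hb'
      exact hb.injOn ha.1 hb'.1 hab
    · intro w hw
      rw [mem_children] at hw
      obtain ⟨a, ha, rfl⟩ := hb.surjOn hw.1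
      have ha : a < T.numV := ha
      refine ⟨a, ?_, rfl⟩
      rw [mem_children]
      refine ⟨ha, ?_, ?_⟩
      · apply hz _ (hpr a ha)
        rw [hsp a ha, hw.2.1]
      · rintro rfl
        exact hw.2.2 hs0
  have e3 : T.legsAt 0 = T'.legsAt 0 := by
    ext i
    rw [mem_legsAt, mem_legsAt, ← hsl i]
    constructor
    · intro hi; rw [hi, hs0]
    · exact hz _ (hl i)
  rw [e1, e2, e3]

theorem Iso.expand {T T' : RawTree n} (hp : T.parent 0 = 0) (hp' : T'.parent 0 = 0)
    (h0 : 0 < T.numV) (e : Iso T T') : Iso T.expand T'.expand := by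
  obtain ⟨σ, hb, hs0, hsp, hsg, hsl⟩ := e
  have hz : ∀ v < T.numV, σ v = 0 → v = 0 := by
    intro v hv hv0
    exact hb.injOn hv h0 (hv0.trans hs0.symm)
  refine ⟨fun v => if v = 0 then 0 else σ (v - 1) + 1, ⟨?_, ?_, ?_⟩, rfl, ?_, ?_, ?_⟩
  · intro v hv
    simp only [RawTree.expand, Set.mem_Iio] at hv ⊢
    split_ifs with hv0
    · omega
    · have : σ (v - 1) < T'.numV := hb.mapsTo (show v - 1 < T.numV by omega)
      omega
  · intro a ha b hb' hab
    simp only [RawTree.expand, Set.mem_Iio] at ha hb' hab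
    split_ifs at hab with h1 h2
    · omega
    · have := hb.injOn (show a - 1 < T.numV by omega) (show b - 1 < T.numV by omega)
        (by omega)
      omega
  · intro w hw
    simp only [RawTree.expand, Set.mem_Iio] at hw
    rcases Nat.eq_zero_or_pos w with rfl | hw0
    · exact ⟨0, by simp [RawTree.expand], by simp⟩
    · obtain ⟨a, ha, haw⟩ := hb.surjOn (show w - 1 < T'.numV by omega)
      have ha : a < T.numV := ha
      refine ⟨a + 1, ?_, ?_⟩
      · simp only [RawTree.expand, Set.mem_Iio]; omega
      · simp; omega
  · intro v hv
    have hv : v < T.numV + 1 := hv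
    rcases v with _ | _ | v
    · simp [RawTree.expand]
    · simp [RawTree.expand, hs0]
    · have h1 : σ (v + 1) ≠ 0 := fun hc => by
        have := hz _ (by omega) hc
        omega
      have h2 := hsp (v + 1) (by omega)
      simp [RawTree.expand, h1, h2]
  · intro v hv
    simp only [RawTree.expand] at hv ⊢
    by_cases hv0 : v = 0
    · simp [hv0]
    · simp only [if_neg hv0]
      simp
      exact hsg _ (by omega)
  · intro i
    simp [RawTree.expand, hsl]

theorem Iso.contract {g : ℕ} {T T' : RawTree n} (h : IsSRT g n 2 T)
    (h' : IsSRT g n 2 T') (hc : RootContractible T) (e : Iso T T') :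
    Iso T.contract T'.contract := by
  have hc' := (Iso.contractible h h' e).1 hc
  obtain ⟨hg0, hV, hpar, hleg⟩ := (contractible_iff T h).1 hc
  obtain ⟨hg0', hV', hpar', hleg'⟩ := (contractible_iff T' h').1 hc'
  obtain ⟨h0, hp, hlt, hl, hg, hst⟩ := h
  obtain ⟨σ, hb, hs0, hsp, hsg, hsl⟩ := e
  have hz : ∀ v < T.numV, 0 < v → 0 < σ v := by
    intro v hv hv0
    rcases Nat.eq_zero_or_pos (σ v) with hc | hc
    · have := hb.injOn hv h0 (hc.trans hs0.symm)
      omega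
    · exact hc
  have hm : ∀ v < T.numV, σ v < T'.numV := fun v hv => hb.mapsTo hv
  have hs1 : σ 1 = 1 := by
    have a := hsp 1 hV
    have b := hlt 1 (by omega) hV
    rw [show T.parent 1 = 0 by omega, hs0] at a
    have c := hz 1 hV (by omega)
    by_contra hne
    have := hpar' (σ 1) (by omega) (hm 1 hV)
    omega
  refine ⟨fun v => σ (v + 1) - 1, ⟨?_, ?_, ?_⟩, ?_, ?_, ?_, ?_⟩
  · intro v hv
    simp only [RawTree.contract, Set.mem_Iio] at hv ⊢
    have := hm (v + 1) (by omega)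
    omega
  · intro a ha b hb' hab
    simp only [RawTree.contract, Set.mem_Iio] at ha hb' hab
    have h1 := hz (a + 1) (by omega) (by omega)
    have h2 := hz (b + 1) (by omega) (by omega)
    have := hb.injOn (show a + 1 < T.numV by omega) (show b + 1 < T.numV by omega)
      (by omega)
    omega
  · intro w hw
    simp only [RawTree.contract, Set.mem_Iio] at hw
    obtain ⟨a, ha, haw⟩ := hb.surjOn (show w + 1 < T'.numV by omega)
    have ha : a < T.numV := ha
    have ha0 : a ≠ 0 := by rintro rfl; omega
    refine ⟨a - 1, ?_, ?_⟩
    · simp only [RawTree.contract, Set.mem_Iio]; omega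
    · simp only
      rw [Nat.sub_add_cancel (by omega), haw]; rfl
  · simp [hs1]
  · intro v hv
    simp only [RawTree.contract] at hv ⊢
    rw [Nat.sub_add_cancel (hz (v + 1) (by omega) (by omega)), ← hsp _ (by omega)]
    rcases Nat.eq_zero_or_pos v with rfl | hv0
    · have b := hlt 1 (by omega) hV
      rw [show T.parent (0 + 1) = 0 by simpa using b]
      simp [hs0, hs1]
    · rw [Nat.sub_add_cancel (hpar (v + 1) (by omega) (by omega))]
  · intro v hv
    simp only [RawTree.contract] at hv ⊢
    rw [Nat.sub_add_cancel (hz (v + 1) (by omega) (by omega))]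
    exact hsg _ (by omega)
  · intro i
    simp only [RawTree.contract]
    rw [Nat.sub_add_cancel (hleg i), hsl]

end RawTree

open RawTree in
theorem srt_finite (g n : ℕ) : Finite (SRT g n 2) := by
  let N := 2 * g + n
  have hgen : ∀ T : SRTRep g n 2, ∀ v < T.1.numV, T.1.genus v < g + 1 := by
    intro T v hv
    have h := T.2.2.2.2.2.1
    have : T.1.genus v ≤ ∑ v ∈ Finset.range T.1.numV, T.1.genus v :=
      Finset.single_le_sum (f := T.1.genus) (fun _ _ => Nat.zero_le _) (by simpa using hv)
    omega
  have hpar : ∀ T : SRTRep g n 2, ∀ v < T.1.numV, T.1.parent v < N + 1 := by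
    intro T v hv
    have h1 : T.1.numV ≤ N := numV_le T.1 T.2
    rcases Nat.eq_zero_or_pos v with rfl | hv0
    · rw [T.2.2.1]; omega
    · have := T.2.2.2.1 v hv0 hv
      omega
  let F : SRTRep g n 2 → Fin (N + 1) × (Fin (N + 1) → Fin (N + 1)) ×
      (Fin (N + 1) → Fin (g + 1)) × (Fin n → Fin (N + 1)) := fun T =>
    (Fin.ofNat (N + 1) T.1.numV, fun v => Fin.ofNat (N + 1) (T.1.parent v),
      fun v => Fin.ofNat (g + 1) (T.1.genus v), fun i => Fin.ofNat (N + 1) (T.1.legAt i))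
  have hF : ∀ T T' : SRTRep g n 2, F T = F T' → Iso T.1 T'.1 := by
    intro T T' hFF
    simp only [F, Prod.mk.injEq] at hFF
    obtain ⟨a, b, c, d⟩ := hFF
    have hN : T.1.numV ≤ N := numV_le T.1 T.2
    have hN' : T'.1.numV ≤ N := numV_le T'.1 T'.2
    have key : ∀ M x y : ℕ, x < M + 1 → y < M + 1 →
        Fin.ofNat (M + 1) x = Fin.ofNat (M + 1) y → x = y := by
      intro M x y hx hy hxy
      have := congrArg Fin.val hxy
      simp only [Fin.val_ofNat] at this
      rwa [Nat.mod_eq_of_lt hx, Nat.mod_eq_of_lt hy] at this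
    have e := key _ _ _ (by omega) (by omega) a
    apply Iso.of_agree _ _ e
    · intro v hv
      have := congrFun b ⟨v, by omega⟩
      exact key _ _ _ (hpar T v hv) (hpar T' v (by omega)) this
    · intro v hv
      have := congrFun c ⟨v, by omega⟩
      exact key _ _ _ (hgen T v hv) (hgen T' v (by omega)) this
    · intro i
      have h1 := T.2.2.2.2.1 i
      have h2 := T'.2.2.2.2.1 i
      exact key _ _ _ (by omega) (by omega) (congrFun d i)
  apply Finite.of_injective (fun q : SRT g n 2 => F (Quot.out q))
  intro q q' hq
  rw [← Quot.out_eq q, ← Quot.out_eq q']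
  exact Quot.sound (hF _ _ hq)

open RawTree in
/-- The pairing on representatives. -/
theorem exists_flip (g n : ℕ) (hne : (g, n) ≠ ((0 : ℕ), (1 : ℕ)))
    (T : SRTRep g n 2) : ∃ S : SRTRep g n 2,
      (RootContractible T.1 → S.1 = T.1.contract) ∧
      (¬ RootContractible T.1 → S.1 = T.1.expand) := by
  by_cases hc : RootContractible T.1
  · exact ⟨⟨T.1.contract, (contract_stable T.1 T.2 hc).1⟩, fun _ => rfl, fun h => absurd hc h⟩
  · exact ⟨⟨T.1.expand, expand_isSRT T.1 T.2 (stablePlus_of_not_contractible hne T.1 T.2 hc)⟩,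
      fun h => absurd h hc, fun _ => rfl⟩

theorem even_of_involution {α : Type} [Finite α] (f : α → α) (hf : ∀ x, f (f x) = x)
    (P : α → Prop) (hP : ∀ x, P (f x) ↔ ¬ P x) : Even (Nat.card α) := by
  classical
  have e : {x // P x} ≃ {x // ¬ P x} :=
    { toFun := fun x => ⟨f x.1, fun hc => (hP x.1).1 hc x.2⟩
      invFun := fun x => ⟨f x.1, (hP x.1).2 x.2⟩
      left_inv := fun x => Subtype.ext (hf x.1)
      right_inv := fun x => Subtype.ext (hf x.1) }
  refine ⟨Nat.card {x // P x}, ?_⟩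
  conv_rhs => rw [Nat.card_congr e]
  rw [← Nat.card_congr (Equiv.sumCompl P), Nat.card_sum, Nat.card_congr e]

open RawTree in
/-- For `g, n` with `2g + n > 0` and `(g, n) ≠ (0, 1)`, the set `SRT_{g,n,2}` of
isomorphism classes of stable rooted trees of type `(g, n, 2)` is a finite set
of even cardinality. -/
theorem srt_two_frozen_finite_even (g n : ℕ) (h : 0 < 2 * g + n)
    (hne : (g, n) ≠ ((0 : ℕ), (1 : ℕ))) :
    Finite (SRT g n 2) ∧ Even (Nat.card (SRT g n 2)) := by
  classical
  have := srt_finite g n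
  choose F hF1 hF2 using exists_flip g n hne
  refine ⟨this, ?_⟩
  have hflip : ∀ T T' : SRTRep g n 2, SRTRel g n 2 T T' →
      SRTRel g n 2 (F T) (F T') := by
    intro T T' hTT
    have hiff := Iso.contractible T.2 T'.2 hTT
    unfold SRTRel
    by_cases hc : RootContractible T.1
    · rw [hF1 T hc, hF1 T' (hiff.1 hc)]
      exact Iso.contract T.2 T'.2 hc hTT
    · rw [hF2 T hc, hF2 T' (fun h' => hc (hiff.2 h'))]
      exact Iso.expand T.2.2.1 T'.2.2.1 T.2.1 hTT
  let f : SRT g n 2 → SRT g n 2 := Quot.map (F) hflip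
  let P : SRT g n 2 → Prop := Quot.lift (fun T => RootContractible T.1)
    (fun T T' hTT => propext (Iso.contractible T.2 T'.2 hTT))
  have hcon : ∀ T : SRTRep g n 2,
      RootContractible (F T).1 ↔ ¬ RootContractible T.1 := by
    intro T
    by_cases hc : RootContractible T.1
    · rw [hF1 T hc]
      exact iff_of_false
        (not_contractible_of_stablePlus _ (contract_stable T.1 T.2 hc).2) (not_not.2 hc)
    · rw [hF2 T hc]
      exact iff_of_true (expand_contractible T.1 T.2.1) hc
  apply even_of_involution f _ P
  · intro q
    induction q using Quot.ind with
    | mk T => exact hcon T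
  · intro q
    induction q using Quot.ind with
    | mk T =>
      apply Quot.sound
      have h1 := hcon T
      change Iso (F (F T)).1 T.1
      by_cases hc : RootContractible T.1
      · have h2 : ¬ RootContractible (F T).1 := fun h' => h1.1 h' hc
        have e1 : (F T).1 = T.1.contract := hF1 T hc
        have e2 : (F (F T)).1
            = (F T).1.expand := hF2 _ h2
        rw [e2, e1]
        exact expand_contract T.1 T.2 hc
      · have h2 : RootContractible (F T).1 := h1.2 hc
        have e1 : (F T).1 = T.1.expand := hF2 T hc
        have e2 : (F (F T)).1
            = (F T).1.contract := hF1 _ h2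
        rw [e2, e1]
        exact contract_expand T.1 T.2.2.1
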